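/- Consider the chain Bell scenario with n binary ±1 observables per party and chain quantity β_chain(p) = Σ_{k=1}^{n−1}(⟨A_kB_k⟩ + ⟨A_kB_{k+1}⟩) + ⟨A_nB_n⟩ − ⟨A_nB_1⟩. For every bipartite no-signaling box p in which Bob's observable B₁ is deterministic (Bob's marginal output distribution at y = 1 is a point mass), β_chain(p) ≤ 2n − 2; moreover this bound is attained. Consequently, since the maximal no-signaling value of β_chain is 2n, the relevance of B₁ for the chain inequality is w_chain = 2n − (2n − 2) = 2. -/

import Mathlib

open Finset

/-- The sign `±1` associated with a binary output. -/
def sgn (b : Bool) : ℝ := if b then 1 else -1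

/-- A bipartite no-signaling box with binary outputs. -/
def IsNSBox {n m : ℕ} (p : Bool → Bool → Fin n → Fin m → ℝ) : Prop :=
  (∀ a b x y, 0 ≤ p a b x y) ∧
  (∀ x y, ∑ a, ∑ b, p a b x y = 1) ∧
  (∀ a x y y', ∑ b, p a b x y = ∑ b, p a b x y') ∧
  (∀ b y x x', ∑ a, p a b x y = ∑ a, p a b x' y)

/-- The correlator `⟨A_x B_y⟩` of a bipartite box with binary `±1` outputs. -/
def corr {n m : ℕ} (p : Bool → Bool → Fin n → Fin m → ℝ)
    (x : Fin n) (y : Fin m) : ℝ :=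
  ∑ a, ∑ b, sgn a * sgn b * p a b x y

/-- Bob's observable `B₁` (input `y = 1`) is deterministic. -/
def DetB1 {n m : ℕ} (hm : 0 < m) (p : Bool → Bool → Fin n → Fin m → ℝ) : Prop :=
  ∃ b0 : Bool, ∀ x b, (∑ a, p a b x ⟨0, hm⟩) = if b = b0 then 1 else 0

/-- The chain Bell quantity
`β_chain = Σ_{k=1}^{n−1}(⟨A_kB_k⟩ + ⟨A_kB_{k+1}⟩) + ⟨A_nB_n⟩ − ⟨A_nB_1⟩`. -/
def chainBell {n : ℕ} (hn : 0 < n) (p : Bool → Bool → Fin n → Fin n → ℝ) : ℝ :=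
  (∑ i : Fin (n - 1),
    (corr p ⟨i.1, by have := i.2; omega⟩ ⟨i.1, by have := i.2; omega⟩ +
      corr p ⟨i.1, by have := i.2; omega⟩ ⟨i.1 + 1, by have := i.2; omega⟩)) +
  corr p ⟨n - 1, by omega⟩ ⟨n - 1, by omega⟩ - corr p ⟨n - 1, by omega⟩ ⟨0, hn⟩

/-!
Since `1 - ab = |a - b|` for signs `a` and `b`, every no-signaling box satisfies
`|⟨A_x⟩ - ⟨B_y⟩| ≤ 1 - ⟨A_xB_y⟩`, with equality when `B_y` is deterministic. Summing along the
path `B₁, A₁, B₂, …, A_{n-1}, B_n, A_n`, the triangle inequality bounds the sum of the `2n - 1`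
positive correlators by `2n - 1 - |⟨A_n⟩ - ⟨B₁⟩|`, and when `B₁` is deterministic the last term
`-⟨A_nB₁⟩ = |⟨A_n⟩ - ⟨B₁⟩| - 1` cancels the defect. Local deterministic boxes attain the bound.
-/

lemma sgn_mul_self (a : Bool) : sgn a * sgn a = 1 := by
  cases a <;> norm_num [sgn]

lemma abs_sgn (a : Bool) : |sgn a| = 1 := by
  cases a <;> norm_num [sgn]

lemma abs_sgn_sub_sgn (a b : Bool) : |sgn a - sgn b| = 1 - sgn a * sgn b := by
  cases a <;> cases b <;> norm_num [sgn]

section Means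

variable {n m : ℕ}

/-- The mean `⟨A_x⟩` of Alice's observable `A_x` when Bob's input is `y`; for a no-signaling box
it does not depend on `y`. -/
def aliceMean (p : Bool → Bool → Fin n → Fin m → ℝ) (x : Fin n) (y : Fin m) : ℝ :=
  ∑ a, ∑ b, sgn a * p a b x y

/-- The mean `⟨B_y⟩` of Bob's observable `B_y` when Alice's input is `x`; for a no-signaling box
it does not depend on `x`. -/
def bobMean (p : Bool → Bool → Fin n → Fin m → ℝ) (x : Fin n) (y : Fin m) : ℝ :=
  ∑ a, ∑ b, sgn b * p a b x y

lemma aliceMean_sub_bobMean (p : Bool → Bool → Fin n → Fin m → ℝ) (x : Fin n) (y : Fin m) :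
    aliceMean p x y - bobMean p x y = ∑ a, ∑ b, (sgn a - sgn b) * p a b x y := by
  simp only [aliceMean, bobMean, sub_mul, sum_sub_distrib]

namespace IsNSBox

variable {p : Bool → Bool → Fin n → Fin m → ℝ}

lemma aliceMean_eq (hp : IsNSBox p) (x : Fin n) (y y' : Fin m) :
    aliceMean p x y = aliceMean p x y' := by
  obtain ⟨-, -, alice_ns, -⟩ := hp
  simp only [aliceMean, ← mul_sum, alice_ns _ x y y']

lemma bobMean_eq (hp : IsNSBox p) (x x' : Fin n) (y : Fin m) :
    bobMean p x y = bobMean p x' y := by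
  obtain ⟨-, -, -, bob_ns⟩ := hp
  simp only [bobMean]
  rw [sum_comm, sum_comm (f := fun a b => sgn b * p a b x' y)]
  simp only [← mul_sum, bob_ns _ y x x']

lemma one_sub_corr_eq_sum (hp : IsNSBox p) (x : Fin n) (y : Fin m) :
    1 - corr p x y = ∑ a, ∑ b, (1 - sgn a * sgn b) * p a b x y := by
  obtain ⟨-, normalized, -, -⟩ := hp
  simp only [corr, sub_mul, one_mul, sum_sub_distrib, normalized]

lemma abs_aliceMean_sub_bobMean_le (hp : IsNSBox p) (x x' : Fin n) (y y' : Fin m) :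
    |aliceMean p x y' - bobMean p x' y| ≤ 1 - corr p x y := by
  rw [hp.aliceMean_eq x y' y, hp.bobMean_eq x' x y]
  calc |aliceMean p x y - bobMean p x y|
      = |∑ a, ∑ b, (sgn a - sgn b) * p a b x y| := by rw [aliceMean_sub_bobMean]
    _ ≤ ∑ a, ∑ b, |(sgn a - sgn b) * p a b x y| :=
        (abs_sum_le_sum_abs _ _).trans (sum_le_sum fun _ _ => abs_sum_le_sum_abs _ _)
    _ = ∑ a, ∑ b, (1 - sgn a * sgn b) * p a b x y := by
        simp only [abs_mul, abs_sgn_sub_sgn, abs_of_nonneg (hp.1 _ _ x y)]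
    _ = 1 - corr p x y := (hp.one_sub_corr_eq_sum x y).symm

lemma exists_eq_zero_of_detB1 (hp : IsNSBox p) {hm : 0 < m} (hdet : DetB1 hm p) :
    ∃ b₀, ∀ a b x, b ≠ b₀ → p a b x ⟨0, hm⟩ = 0 := by
  obtain ⟨b₀, marginal⟩ := hdet
  refine ⟨b₀, fun a b x hb => ?_⟩
  have hsum : ∑ a, p a b x ⟨0, hm⟩ = 0 := by rw [marginal, if_neg hb]
  exact (sum_eq_zero_iff_of_nonneg fun a _ => hp.1 a b x _).1 hsum a (mem_univ a)

lemma one_sub_corr_le_of_detB1 (hp : IsNSBox p) {hm : 0 < m} (hdet : DetB1 hm p)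
    (x x' : Fin n) (y' : Fin m) :
    1 - corr p x ⟨0, hm⟩ ≤ |aliceMean p x y' - bobMean p x' ⟨0, hm⟩| := by
  obtain ⟨b₀, support⟩ := hp.exists_eq_zero_of_detB1 hdet
  rw [hp.aliceMean_eq x y' ⟨0, hm⟩, hp.bobMean_eq x' x]
  have factor (a b : Bool) : (1 - sgn a * sgn b) * p a b x ⟨0, hm⟩ =
      -sgn b₀ * ((sgn a - sgn b) * p a b x ⟨0, hm⟩) := by
    obtain rfl | hb := eq_or_ne b b₀
    · linear_combination -p a b x ⟨0, hm⟩ * sgn_mul_self b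
    · simp only [support a b x hb, mul_zero]
  calc 1 - corr p x ⟨0, hm⟩
      = -sgn b₀ * (aliceMean p x ⟨0, hm⟩ - bobMean p x ⟨0, hm⟩) := by
        simp only [hp.one_sub_corr_eq_sum, factor, ← mul_sum, aliceMean_sub_bobMean]
    _ ≤ |-sgn b₀ * (aliceMean p x ⟨0, hm⟩ - bobMean p x ⟨0, hm⟩)| := le_abs_self _
    _ = |aliceMean p x ⟨0, hm⟩ - bobMean p x ⟨0, hm⟩| := by
        rw [abs_mul, abs_neg, abs_sgn, one_mul]

end IsNSBox

end Means

lemma dist_zero_last_le_sum_zigzag {α : Type*} [PseudoMetricSpace α] {m : ℕ}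
    (u : Fin m → α) (v : Fin (m + 1) → α) :
    dist (v 0) (v (Fin.last m)) ≤
      ∑ i : Fin m, (dist (u i) (v i.castSucc) + dist (u i) (v i.succ)) := by
  induction m with
  | zero => simp
  | succ m ih =>
    rw [Fin.sum_univ_castSucc]
    calc dist (v 0) (v (Fin.last (m + 1)))
        ≤ dist (v 0) (v (Fin.last m).castSucc) +
            dist (v (Fin.last m).castSucc) (v (Fin.last (m + 1))) := dist_triangle _ _ _
      _ ≤ _ := add_le_add (ih (fun i => u i.castSucc) (fun i => v i.castSucc))
          (dist_triangle_left _ _ (u (Fin.last m)))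

lemma chainBell_succ {m : ℕ} (p : Bool → Bool → Fin (m + 1) → Fin (m + 1) → ℝ) :
    chainBell m.succ_pos p =
      ∑ i : Fin m, (corr p i.castSucc i.castSucc + corr p i.castSucc i.succ) +
        corr p (Fin.last m) (Fin.last m) - corr p (Fin.last m) 0 :=
  rfl

lemma IsNSBox.chainBell_le {m : ℕ} {p : Bool → Bool → Fin (m + 1) → Fin (m + 1) → ℝ}
    (hp : IsNSBox p) :
    chainBell m.succ_pos p ≤ 2 * m +
      (1 - corr p (Fin.last m) 0 - |aliceMean p (Fin.last m) 0 - bobMean p 0 0|) := by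
  set A : Fin (m + 1) → ℝ := fun x => aliceMean p x 0
  set B : Fin (m + 1) → ℝ := fun y => bobMean p 0 y
  have corr_le (x y) : corr p x y ≤ 1 - dist (A x) (B y) :=
    le_sub_comm.1 (hp.abs_aliceMean_sub_bobMean_le x 0 y 0)
  have path_le : ∑ i : Fin m, (corr p i.castSucc i.castSucc + corr p i.castSucc i.succ) ≤
      2 * m - dist (B 0) (B (Fin.last m)) :=
    calc ∑ i : Fin m, (corr p i.castSucc i.castSucc + corr p i.castSucc i.succ)
        ≤ ∑ i : Fin m, (2 - (dist (A i.castSucc) (B i.castSucc) +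
            dist (A i.castSucc) (B i.succ))) :=
          sum_le_sum fun i _ => by
            linarith [corr_le i.castSucc i.castSucc, corr_le i.castSucc i.succ]
      _ = 2 * m - ∑ i : Fin m, (dist (A i.castSucc) (B i.castSucc) +
            dist (A i.castSucc) (B i.succ)) := by
          rw [sum_sub_distrib, sum_const, card_univ, Fintype.card_fin, nsmul_eq_mul, mul_comm]
      _ ≤ 2 * m - dist (B 0) (B (Fin.last m)) :=
          sub_le_sub_left (dist_zero_last_le_sum_zigzag (fun i => A i.castSucc) B) _
  have closing : |A (Fin.last m) - B 0| ≤
      dist (A (Fin.last m)) (B (Fin.last m)) + dist (B 0) (B (Fin.last m)) := by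
    rw [← Real.dist_eq]
    exact dist_triangle_right _ _ _
  rw [chainBell_succ]
  linarith [corr_le (Fin.last m) (Fin.last m)]

lemma IsNSBox.chainBell_le_of_detB1 {n : ℕ} {hn : 0 < n}
    {p : Bool → Bool → Fin n → Fin n → ℝ} (hp : IsNSBox p) (hdet : DetB1 hn p) :
    chainBell hn p ≤ 2 * (n : ℝ) - 2 := by
  obtain ⟨m, rfl⟩ := Nat.exists_eq_add_one.2 hn
  have closing := hp.one_sub_corr_le_of_detB1 hdet (Fin.last m) 0 0
  rw [Fin.mk_zero'] at closing
  push_cast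
  linarith [hp.chainBell_le]

section Deterministic

variable {n m : ℕ}

/-- The local deterministic box in which Alice answers `α x` and Bob answers `β y`. -/
def deterministicBox (α : Fin n → Bool) (β : Fin m → Bool) :
    Bool → Bool → Fin n → Fin m → ℝ :=
  fun a b x y => if a = α x ∧ b = β y then 1 else 0

lemma isNSBox_deterministicBox (α : Fin n → Bool) (β : Fin m → Bool) :
    IsNSBox (deterministicBox α β) := by
  refine ⟨fun a b x y => ?_, ?_, ?_, ?_⟩
  · exact ite_nonneg zero_le_one le_rfl
  all_goals simp [deterministicBox, ite_and]

lemma detB1_deterministicBox (hm : 0 < m) (α : Fin n → Bool) (β : Fin m → Bool) :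
    DetB1 hm (deterministicBox α β) :=
  ⟨β ⟨0, hm⟩, fun x b => by simp [deterministicBox, ite_and]⟩

lemma corr_deterministicBox (α : Fin n → Bool) (β : Fin m → Bool) (x : Fin n) (y : Fin m) :
    corr (deterministicBox α β) x y = sgn (α x) * sgn (β y) := by
  simp [corr, deterministicBox, ite_and]

lemma chainBell_deterministicBox_const (hn : 0 < n) (c : Bool) :
    chainBell hn (deterministicBox (fun _ => c) (fun _ => c)) = 2 * (n : ℝ) - 2 := by
  obtain ⟨m, rfl⟩ := Nat.exists_eq_add_one.2 hn
  simp only [chainBell_succ, corr_deterministicBox, sgn_mul_self, sum_const, card_univ,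
    Fintype.card_fin, nsmul_eq_mul]
  push_cast
  ring

end Deterministic

/-- The maximum of the chain Bell quantity over no-signaling boxes in which `B₁` is
deterministic equals `2n − 2` (the bound holds and is attained); consequently, the maximal
no-signaling value being `2n`, the relevance of `B₁` for the chain inequality is
`w_chain = 2n − (2n − 2) = 2`. -/
theorem chain_relevance {n : ℕ} (hn : 0 < n) :
    IsGreatest {v : ℝ | ∃ p : Bool → Bool → Fin n → Fin n → ℝ,
        IsNSBox p ∧ DetB1 hn p ∧ v = chainBell hn p} (2 * (n : ℝ) - 2) ∧
      2 * (n : ℝ) - (2 * (n : ℝ) - 2) = 2 := by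
  refine ⟨⟨?attained, ?bound⟩, by ring⟩
  case attained =>
    exact ⟨deterministicBox (fun _ => true) (fun _ => true), isNSBox_deterministicBox _ _,
      detB1_deterministicBox _ _ _, (chainBell_deterministicBox_const hn true).symm⟩
  case bound =>
    rintro _ ⟨p, hp, hdet, rfl⟩
    exact hp.chainBell_le_of_detB1 hdet
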